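/- The smoothed M³N objective is a loss-rescaled CRF objective. Assume ℓⁱ_{yⁱ} = 0 for all i. For every μ > 0 and w ∈ ℝ^p, J_μ(w) := (λ/2)‖w‖² + sup_{α∈Sⁿ}{⟨Aw, α⟩ − g(α) − μ d(α)} = (λ/2)‖w‖² − (μ/n) Σ_{i=1}^n log p(yⁱ | xⁱ; w) − μ log|𝒴|, where p(y | xⁱ; w) = exp((ℓⁱ_y + ⟨w, φ(xⁱ, y)⟩)/μ) / Σ_{y'∈𝒴} exp((ℓⁱ_{y'} + ⟨w, φ(xⁱ, y')⟩)/μ). -/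

import Mathlib

open scoped RealInnerProductSpace BigOperators

/-- The simplex-product `Sⁿ = {α ∈ [0,1]^{n|𝒴|} : Σ_y αⁱ_y = 1/n for each i}`. -/
def simplexSn (n : ℕ) (Y : Type*) [Fintype Y] : Set (Fin n → Y → ℝ) :=
  {a | (∀ i y, a i y ∈ Set.Icc (0 : ℝ) 1) ∧ ∀ i, ∑ y, a i y = 1 / n}

theorem aux_le {Y : Type*} [Fintype Y] [Nonempty Y] (s a : Y → ℝ) (t : ℝ) (ht : 0 < t)
    (ha : ∀ y, 0 ≤ a y) (hs : ∑ y, a y = t) :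
    ∑ y, a y * s y - ∑ y, a y * Real.log (a y) ≤
      t * Real.log (∑ y, Real.exp (s y)) - t * Real.log t := by
  have hZ : 0 < ∑ y, Real.exp (s y) :=
    Finset.sum_pos (fun y _ => Real.exp_pos _) Finset.univ_nonempty
  set Z := ∑ y, Real.exp (s y) with hZd
  have key : ∀ y, a y * s y - a y * Real.log (a y) ≤
      a y * (Real.log Z - Real.log t) + (t / Z * Real.exp (s y) - a y) := by
    intro y
    have hq : 0 < t / Z * Real.exp (s y) := by positivity
    rcases (ha y).eq_or_lt with h | h
    · rw [← h]; simp; positivity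
    · have h1 := Real.log_le_sub_one_of_pos (div_pos hq h)
      rw [Real.log_div hq.ne' h.ne', Real.log_mul (by positivity) (Real.exp_pos _).ne',
        Real.log_div ht.ne' hZ.ne', Real.log_exp] at h1
      have h2 := mul_le_mul_of_nonneg_left h1 h.le
      have h3 : a y * (t / Z * Real.exp (s y) / a y - 1) = t / Z * Real.exp (s y) - a y := by
        field_simp
      rw [h3] at h2
      linarith
  rw [← Finset.sum_sub_distrib]
  refine (Finset.sum_le_sum fun y _ => key y).trans_eq ?_
  rw [Finset.sum_add_distrib, Finset.sum_sub_distrib, ← Finset.sum_mul, ← Finset.mul_sum, hs,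
    ← hZd]
  field_simp
  ring

theorem aux_eq {Y : Type*} [Fintype Y] [Nonempty Y] (s : Y → ℝ) (t : ℝ) (ht : 0 < t) :
    ∃ a : Y → ℝ, (∀ y, 0 ≤ a y) ∧ (∑ y, a y = t) ∧
    ∑ y, a y * s y - ∑ y, a y * Real.log (a y) =
      t * Real.log (∑ y, Real.exp (s y)) - t * Real.log t := by
  have hZ : 0 < ∑ y, Real.exp (s y) :=
    Finset.sum_pos (fun y _ => Real.exp_pos _) Finset.univ_nonempty
  set Z := ∑ y, Real.exp (s y) with hZd
  have hsum : ∑ y, t / Z * Real.exp (s y) = t := by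
    rw [← Finset.mul_sum, ← hZd]; field_simp
  refine ⟨fun y => t / Z * Real.exp (s y), fun y => by positivity, hsum, ?_⟩
  rw [← Finset.sum_sub_distrib]
  have : ∀ y, t / Z * Real.exp (s y) * s y -
      t / Z * Real.exp (s y) * Real.log (t / Z * Real.exp (s y)) =
      t / Z * Real.exp (s y) * (Real.log Z - Real.log t) := by
    intro y
    rw [Real.log_mul (by positivity) (Real.exp_pos _).ne',
        Real.log_div ht.ne' hZ.ne', Real.log_exp]
    ring
  simp only [this]
  rw [← Finset.sum_mul, hsum]
  ring

/-- **The smoothed M³N objective is a loss-rescaled CRF objective.**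
Assume `ℓⁱ_{yⁱ} = 0` for all `i`.  For every `μ > 0` and `w ∈ ℝ^p`,
`J_μ(w) := (λ/2)‖w‖² + sup_{α∈Sⁿ}{⟨Aw, α⟩ − g(α) − μ d(α)}
  = (λ/2)‖w‖² − (μ/n) Σᵢ log p(yⁱ | xⁱ; w) − μ log|𝒴|`,
where `p(y | xⁱ; w) = exp((ℓⁱ_y + ⟨w, φ(xⁱ,y)⟩)/μ) / Σ_{y'} exp((ℓⁱ_{y'} + ⟨w, φ(xⁱ,y')⟩)/μ)`,
`⟨Aw, α⟩ = Σᵢ Σ_y αⁱ_y ⬝ (−⟨ψⁱ_y, w⟩)` with `ψⁱ_y = φ(xⁱ,yⁱ) − φ(xⁱ,y)`,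
`g(α) = −Σᵢ Σ_y ℓⁱ_y αⁱ_y`, and `d(α) = Σᵢ Σ_y αⁱ_y log αⁱ_y + log n + log|𝒴|`. -/
theorem smoothed_m3n_is_crf {n p : ℕ} [NeZero n] {Y : Type*} [Fintype Y] [Nonempty Y]
    (φ : Fin n → Y → EuclideanSpace ℝ (Fin p)) (yi : Fin n → Y)
    (ℓ : Fin n → Y → ℝ) (hℓ0 : ∀ i, ℓ i (yi i) = 0)
    (lam : ℝ) (hlam : 0 < lam)
    (μ : ℝ) (hμ : 0 < μ) (w : EuclideanSpace ℝ (Fin p)) :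
    lam / 2 * ‖w‖ ^ 2 +
      sSup ((fun a : Fin n → Y → ℝ =>
        (∑ i, ∑ y, a i y * (-⟪φ i (yi i) - φ i y, w⟫)) -
          (-(∑ i, ∑ y, ℓ i y * a i y)) -
          μ * ((∑ i, ∑ y, a i y * Real.log (a i y)) +
                Real.log n + Real.log (Fintype.card Y))) '' simplexSn n Y)
    = lam / 2 * ‖w‖ ^ 2 -
        μ / n * ∑ i, Real.log
          (Real.exp ((ℓ i (yi i) + ⟪w, φ i (yi i)⟫) / μ) /
            ∑ y', Real.exp ((ℓ i y' + ⟪w, φ i y'⟫) / μ)) -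
        μ * Real.log (Fintype.card Y) := by
  have hn : (0 : ℝ) < n := by exact_mod_cast Nat.pos_of_ne_zero (NeZero.ne n)
  have ht : (0 : ℝ) < 1 / n := by positivity
  have ht1 : (1 : ℝ) / n ≤ 1 := by
    rw [div_le_one hn]; exact_mod_cast Nat.pos_of_ne_zero (NeZero.ne n)
  set s : Fin n → Y → ℝ := fun i y => (ℓ i y + ⟪w, φ i y⟫) / μ with hsdef
  have hZ : ∀ i, 0 < ∑ y, Real.exp (s i y) := fun i =>
    Finset.sum_pos (fun y _ => Real.exp_pos _) Finset.univ_nonempty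
  set V : ℝ := ∑ i, (μ * (1 / n * Real.log (∑ y, Real.exp (s i y)) - 1 / n * Real.log (1 / n))
      - 1 / n * ⟪w, φ i (yi i)⟫) - μ * (Real.log n + Real.log (Fintype.card Y)) with hV
  have hF : ∀ a ∈ simplexSn n Y, (∑ i, ∑ y, a i y * (-⟪φ i (yi i) - φ i y, w⟫)) -
          (-(∑ i, ∑ y, ℓ i y * a i y)) -
          μ * ((∑ i, ∑ y, a i y * Real.log (a i y)) +
                Real.log n + Real.log (Fintype.card Y)) =
      ∑ i, (μ * (∑ y, a i y * s i y - ∑ y, a i y * Real.log (a i y))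
      - 1 / n * ⟪w, φ i (yi i)⟫) - μ * (Real.log n + Real.log (Fintype.card Y)) := by
    intro a ha
    have h1 : ∀ i, μ * (∑ y, a i y * s i y - ∑ y, a i y * Real.log (a i y))
        - 1 / n * ⟪w, φ i (yi i)⟫ = (∑ y, a i y * (-⟪φ i (yi i) - φ i y, w⟫)) +
          (∑ y, ℓ i y * a i y) - μ * ∑ y, a i y * Real.log (a i y) := by
      intro i
      rw [← ha.2 i, mul_sub, Finset.mul_sum, Finset.sum_mul, sub_right_comm,
        ← Finset.sum_sub_distrib, ← Finset.sum_add_distrib]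
      congr 1
      refine Finset.sum_congr rfl fun y _ => ?_
      rw [inner_sub_left, real_inner_comm w, real_inner_comm w]
      simp only [hsdef]
      field_simp
      ring
    simp only [h1]
    rw [Finset.sum_sub_distrib, Finset.sum_add_distrib, ← Finset.mul_sum]
    ring
  have hsup : IsGreatest ((fun a : Fin n → Y → ℝ =>
        (∑ i, ∑ y, a i y * (-⟪φ i (yi i) - φ i y, w⟫)) -
          (-(∑ i, ∑ y, ℓ i y * a i y)) -
          μ * ((∑ i, ∑ y, a i y * Real.log (a i y)) +
                Real.log n + Real.log (Fintype.card Y))) '' simplexSn n Y) V := by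
    constructor
    · choose a ha0 ha1 ha2 using fun i => aux_eq (s i) (1 / n) ht
      have ha : a ∈ simplexSn n Y := by
        refine ⟨fun i y => ⟨ha0 i y, ?_⟩, ha1⟩
        refine le_trans ?_ ((ha1 i).le.trans ht1)
        exact Finset.single_le_sum (fun y _ => ha0 i y) (Finset.mem_univ y)
      refine ⟨a, ha, ?_⟩
      refine (hF a ha).trans ?_
      simp only [ha2, hV]
    · rintro _ ⟨a, ha, rfl⟩
      refine (hF a ha).trans_le ?_
      rw [hV]
      refine sub_le_sub_right (Finset.sum_le_sum fun i _ => sub_le_sub_right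
        (mul_le_mul_of_nonneg_left
          (aux_le (s i) (a i) (1 / n) ht (fun y => (ha.1 i y).1) (ha.2 i)) hμ.le) _) _
  rw [hsup.csSup_eq, hV]
  have hlog : ∀ i, Real.log (Real.exp ((ℓ i (yi i) + ⟪w, φ i (yi i)⟫) / μ) /
            ∑ y', Real.exp (s i y')) =
      ⟪w, φ i (yi i)⟫ / μ - Real.log (∑ y', Real.exp (s i y')) := by
    intro i
    rw [Real.log_div (Real.exp_pos _).ne' (hZ i).ne', Real.log_exp, hℓ0, zero_add]
  have hterm : ∀ i, μ * (1 / n * Real.log (∑ y, Real.exp (s i y)) - 1 / n * Real.log (1 / n))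
      - 1 / n * ⟪w, φ i (yi i)⟫ = -(μ / n) * (⟪w, φ i (yi i)⟫ / μ -
        Real.log (∑ y', Real.exp (s i y'))) + μ / n * Real.log n := by
    intro i
    rw [one_div, Real.log_inv]
    field_simp
    ring
  simp only [hterm]
  rw [Finset.sum_congr rfl fun i _ => hlog i, Finset.sum_add_distrib, ← Finset.mul_sum]
  simp only [Finset.sum_const, Finset.card_univ, Fintype.card_fin, nsmul_eq_mul]
  field_simp
  ring
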